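/- Let C₇ = ⟨(x+1)^a + u(x+1)^{t₁} h₁(x) + u²(x+1)^{t₂} h₂(x), u(x+1)^b + u²(x+1)^{t₃} h₃(x)⟩ be a Type 7 ideal of 𝓡, where 0 ≤ b < U ≤ a ≤ 2^s − 1 with U = a if h₁ = 0 and U = min{a, 2^s − a + t₁} if h₁ ≠ 0, 0 ≤ t₁ < b, h₁, h₂, h₃ each either 0 or a unit of 𝓚, and 0 ≤ t₂ < W, 0 ≤ t₃ < W, where W = min{k ≥ 0 : u²(x+1)^k ∈ C₇}. Then W equals: (1) b, if h₁ = h₂ = h₃ = 0; (2) min{b, a − b + t₃}, if h₁ = h₂ = 0 and h₃ ≠ 0; (3) min{2^s − a + t₂, b}, if h₂ ≠ 0 and h₁ = h₃ = 0; (4) min{2^s − a + t₂, b, a − b + t₃}, if h₁ = 0, h₂ ≠ 0 and h₃ ≠ 0; (5) t₁, if h₁ ≠ 0 and h₂ = h₃ = 0; (6) min{2^s − a + t₂, t₁}, if h₁ ≠ 0, h₂ ≠ 0 and h₃ = 0; (7) min{β₃, β₄, b, 2^s − b + t₃}, if h₁ ≠ 0 and h₃ ≠ 0; where β₃ = 2^s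 − a + t₁ − b + t₃ if h₂ = 0, β₃ = min{2^s − a + t₂, 2^s − a + t₁ − b + t₃} if h₂ ≠ 0 and t₂ ≠ t₁ − b + t₃, β₃ = 2^s − a + t₁ − b + t₃ + α₃ if h₂ ≠ 0 and t₂ = t₁ − b + t₃; β₄ = min{t₁, a − b + t₃} if t₁ ≠ a − b + t₃, β₄ = t₁ + α₄ if t₁ = a − b + t₃; α₃ = max{0 ≤ k ≤ 2^s : (x+1)^k divides h₂(x) − h₁(x)h₃(x) in 𝓚}; α₄ = max{0 ≤ k ≤ 2^s : (x+1)^k divides h₁(x) − h₃(x) in 𝓚}. -/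

import Mathlib

noncomputable section

open Polynomial

/-- The finite field `GF(2^m)`. -/
abbrev Fq (m : ℕ) : Type := GaloisField 2 m

/-- The ring `R₃ = F[u]/⟨u³⟩`. -/
abbrev R3 (m : ℕ) : Type := AdjoinRoot (X ^ 3 : (Fq m)[X])

/-- The polynomial `x^{2^s} + 1` over `R₃`. -/
abbrev gR (m s : ℕ) : (R3 m)[X] := X ^ (2 ^ s) + 1

/-- The polynomial `x^{2^s} + 1` over `F`. -/
abbrev gK (m s : ℕ) : (Fq m)[X] := X ^ (2 ^ s) + 1

/-- The ring `𝓡 = R₃[x]/⟨x^{2^s}+1⟩`. -/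
abbrev RR (m s : ℕ) : Type := AdjoinRoot (gR m s)

/-- The ring `𝓚 = F[x]/⟨x^{2^s}+1⟩`. -/
abbrev KK (m s : ℕ) : Type := AdjoinRoot (gK m s)

/-- The element `u` of `R₃`. -/
def uu (m : ℕ) : R3 m := AdjoinRoot.root _

/-- The element `u` of `𝓡`. -/
def uR (m s : ℕ) : RR m s := algebraMap (R3 m) (RR m s) (uu m)

/-- The element `x` of `𝓡`. -/
def xR (m s : ℕ) : RR m s := AdjoinRoot.root _

/-- The element `x` of `𝓚`. -/
def xK (m s : ℕ) : KK m s := AdjoinRoot.root _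

lemma gR_monic (m s : ℕ) : (gR m s).Monic := by
  have h : (gR m s) = X ^ (2 ^ s) + C 1 := by simp [gR]
  rw [h]; exact monic_X_pow_add_C _ (by positivity)

lemma gK_monic (m s : ℕ) : (gK m s).Monic := by
  have h : (gK m s) = X ^ (2 ^ s) + C 1 := by simp [gK]
  rw [h]; exact monic_X_pow_add_C _ (by positivity)

/-- The standard representative (of degree `< 2^s`) of an element of `𝓡`. -/
def repR (m s : ℕ) (c : RR m s) : (R3 m)[X] := AdjoinRoot.modByMonicHom (gR_monic m s) c

/-- The standard representative (of degree `< 2^s`) of an element of `𝓚`. -/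
def repK (m s : ℕ) (c : KK m s) : (Fq m)[X] := AdjoinRoot.modByMonicHom (gK_monic m s) c

/-- The `j`-th coefficient of the standard representative of `c ∈ 𝓡`. -/
def coeffR (m s : ℕ) (c : RR m s) (j : ℕ) : R3 m := (repR m s c).coeff j

/-- The dot product on `𝓡`. -/
def dotR (m s : ℕ) (c d : RR m s) : R3 m :=
  ∑ j ∈ Finset.range (2 ^ s), coeffR m s c j * coeffR m s d j

/-- The dual of a set of codewords. -/
def dualSet (m s : ℕ) (S : Set (RR m s)) : Set (RR m s) :=
  {c | ∀ d ∈ S, dotR m s c d = 0}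

/-- A cyclic code (ideal of `𝓡`) is self-dual if it coincides with its dual. -/
def IsSelfDual (m s : ℕ) (C : Ideal (RR m s)) : Prop :=
  (C : Set (RR m s)) = dualSet m s (C : Set (RR m s))

/-- The annihilator of a set of codewords. -/
def annSet (m s : ℕ) (S : Set (RR m s)) : Set (RR m s) :=
  {c | ∀ d ∈ S, c * d = 0}

/-- The reciprocal `c*(x) = x^{deg c} c(x⁻¹)` of an element of `𝓡`. -/
def recip (m s : ℕ) (c : RR m s) : RR m s :=
  xR m s ^ (repR m s c).natDegree *
    Polynomial.aeval (Ring.inverse (xR m s)) (repR m s c)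

/-- Reduction `R₃ → F` modulo `u`. -/
def epsR3 (m : ℕ) : R3 m →+* Fq m :=
  AdjoinRoot.lift (RingHom.id (Fq m)) 0 (by simp)

lemma xK_pow_add_one (m s : ℕ) : (xK m s) ^ (2 ^ s) + 1 = 0 := by
  have h := AdjoinRoot.eval₂_root (gK m s)
  simpa [gK, xK] using h

lemma xR_pow_add_one (m s : ℕ) : (xR m s) ^ (2 ^ s) + 1 = 0 := by
  have h := AdjoinRoot.eval₂_root (gR m s)
  simpa [gR, xR] using h

/-- Reduction `μ : 𝓡 → 𝓚` modulo `u`. -/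
def muRK (m s : ℕ) : RR m s →+* KK m s :=
  AdjoinRoot.lift ((algebraMap (Fq m) (KK m s)).comp (epsR3 m)) (xK m s) (by
    simp only [gR, eval₂_add, eval₂_pow, eval₂_X, eval₂_one]
    exact xK_pow_add_one m s)

/-- The natural inclusion `𝓚 → 𝓡`. -/
def KtoR (m s : ℕ) : KK m s →+* RR m s :=
  AdjoinRoot.lift ((algebraMap (R3 m) (RR m s)).comp (algebraMap (Fq m) (R3 m))) (xR m s) (by
    simp only [gK, eval₂_add, eval₂_pow, eval₂_X, eval₂_one]
    exact xR_pow_add_one m s)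

/-- The `i`-th torsion code of a set `S ⊆ 𝓡`. -/
def TorSet (m s : ℕ) (S : Set (RR m s)) (i : ℕ) : Set (KK m s) :=
  muRK m s '' {f | (uR m s) ^ i * f ∈ S}

/-- The torsion degree `T_i`: the (unique) `k` with `Tor_i = ⟨(x+1)^k⟩`. -/
def Tdeg (m s : ℕ) (S : Set (RR m s)) (i : ℕ) : ℕ :=
  sInf {k | TorSet m s S i =
    ((Ideal.span {(xK m s + 1) ^ k} : Ideal (KK m s)) : Set (KK m s))}

/-- Substitution `h(x) ↦ h(x⁻¹)` on `𝓚`. -/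
def invSub (m s : ℕ) (h : KK m s) : KK m s :=
  Polynomial.aeval (Ring.inverse (xK m s)) (repK m s h)


open scoped Classical

section Abstract

variable {K : Type*} [CommRing K]

/-- `z` has `y`-adic valuation `v` (up to nilpotence). -/
def YVal (y z : K) (v : ℕ) : Prop := y ^ v ∣ z ∧ z ∣ y ^ v

lemma YVal.zero (y : K) (N v : ℕ) (hN : y ^ N = 0) (h : N ≤ v) : YVal y 0 v :=
  ⟨dvd_zero _, by rw [pow_eq_zero_of_le h hN]⟩

lemma YVal.unit (y g : K) (v : ℕ) (hg : IsUnit g) : YVal y (y ^ v * g) v :=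
  ⟨Dvd.intro _ rfl, by
    obtain ⟨g, rfl⟩ := hg
    exact ⟨(g⁻¹ : Kˣ), by simp [mul_assoc]⟩⟩

lemma YVal.neg {y z : K} {v : ℕ} (h : YVal y z v) : YVal y (-z) v :=
  ⟨(dvd_neg).2 h.1, (neg_dvd).2 h.2⟩

lemma YVal.shift {y z : K} {v : ℕ} (h : YVal y z v) (i : ℕ) : YVal y (y ^ i * z) (i + v) :=
  ⟨by rw [pow_add]; exact mul_dvd_mul_left _ h.1, by rw [pow_add]; exact mul_dvd_mul_left _ h.2⟩

lemma unit_add_y {y g : K} {N d : ℕ} (hN : y ^ N = 0) (hd : d ≠ 0) (hg : IsUnit g) (h : K) :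
    IsUnit (g + y ^ d * h) := by
  have hy : IsNilpotent y := ⟨N, hN⟩
  have : IsNilpotent (y ^ d * h) :=
    (Commute.all _ _).isNilpotent_mul_right (hy.pow_of_pos hd)
  exact this.isUnit_add_left_of_commute hg (Commute.all _ _)

lemma YVal.sub_lt {y g h : K} {N i j : ℕ} (hN : y ^ N = 0) (hg : IsUnit g) (hij : i < j) :
    YVal y (y ^ i * g - y ^ j * h) i := by
  have : y ^ i * g - y ^ j * h = y ^ i * (g + y ^ (j - i) * (-h)) := by
    conv_lhs => rw [show j = i + (j - i) by omega, pow_add]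
    ring
  rw [this]
  exact YVal.unit _ _ _ (unit_add_y hN (by omega) hg _)

lemma YVal.sub_ne {y g h : K} {N i j : ℕ} (hN : y ^ N = 0) (hg : IsUnit g) (hh : IsUnit h)
    (hij : i ≠ j) : YVal y (y ^ i * g - y ^ j * h) (min i j) := by
  rcases lt_or_gt_of_ne hij with hl | hl
  · rw [min_eq_left hl.le]; exact YVal.sub_lt hN hg hl
  · rw [min_eq_right hl.le, ← neg_sub]; exact (YVal.sub_lt hN hh hl).neg

lemma YVal.of_sup {y : K} {N : ℕ} (hN : y ^ N = 0) (hloc : ∀ w : K, IsUnit w ∨ y ∣ w) (z : K) :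
    YVal y z (sSup {k : ℕ | k ≤ N ∧ y ^ k ∣ z}) := by
  set S := {k : ℕ | k ≤ N ∧ y ^ k ∣ z} with hS
  have hb : BddAbove S := ⟨N, fun k hk => hk.1⟩
  have hne : S.Nonempty := ⟨0, by simp [hS]⟩
  obtain ⟨h1, w, hw⟩ := Nat.sSup_mem hne hb
  have hmax : ∀ k ∈ S, k ≤ sSup S := fun k hk => le_csSup hb hk
  generalize sSup S = v at *
  rcases eq_or_lt_of_le h1 with h | h
  · subst h
    rw [hw, hN, zero_mul]; exact YVal.zero y v v hN le_rfl
  · rcases hloc w with hu | ⟨c, rfl⟩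
    · rw [hw]; exact YVal.unit _ _ _ hu
    · exfalso
      have := hmax (v + 1) ⟨h, c, by rw [hw]; ring⟩
      omega

lemma y_le_of_dvd [Nontrivial K] {y : K} {N : ℕ} (hN : y ^ N = 0)
    (hann : ∀ (p : K) (a : ℕ), a ≤ N → p * y ^ a = 0 → ∃ r, p = r * y ^ (N - a))
    {i k : ℕ} (hk : k < N) (h : y ^ i ∣ y ^ k) : i ≤ k := by
  by_contra hlt
  obtain ⟨c, hc⟩ := h
  have hu := unit_add_y (g := 1) (d := i - k) hN (by omega) isUnit_one (-c)
  have h0 : y ^ k * (1 + y ^ (i - k) * (-c)) = 0 := by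
    have : y ^ i = y ^ k * y ^ (i - k) := by rw [← pow_add]; congr 1; omega
    rw [this] at hc
    linear_combination hc
  have h1 : (1 : K) * y ^ k = 0 := by rw [one_mul]; exact (hu.mul_left_eq_zero).1 h0
  obtain ⟨r, hr⟩ := hann 1 k hk.le h1
  have h2 : IsUnit (y ^ (N - k)) := IsUnit.of_mul_eq_one r (by rw [mul_comm]; exact hr.symm)
  have h3 : IsUnit y := (isUnit_pow_iff (by omega)).1 h2
  have := h3.pow N
  rw [hN] at this
  exact not_isUnit_zero this

lemma sInf_lemma [Nontrivial K] {y : K} {N : ℕ} (hN : y ^ N = 0)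
    (hann : ∀ (p : K) (a : ℕ), a ≤ N → p * y ^ a = 0 → ∃ r, p = r * y ^ (N - a))
    {A B D : K} {a b vA vB vD : ℕ} (hb : b < N) (hba : b < a)
    (hA : YVal y A vA) (hB : YVal y B vB) (hD : YVal y D vD) (P : ℕ → Prop)
    (hP : ∀ k, P k ↔ ∃ r₀ p₁ p₂ q₁ r, y ^ k = r₀ * A + p₁ * B + p₂ * y ^ a + q₁ * y ^ b + r * D) :
    sInf {k | P k} = min (min vA vB) (min b vD) := by
  set w := min (min vA vB) (min b vD) with hw
  have hmem : P w := by
    rw [hP]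
    have : w = vA ∨ w = vB ∨ w = b ∨ w = vD := by omega
    rcases this with h | h | h | h
    · obtain ⟨c, hc⟩ := hA.2
      exact ⟨c, 0, 0, 0, 0, by rw [h, hc]; ring⟩
    · obtain ⟨c, hc⟩ := hB.2
      exact ⟨0, c, 0, 0, 0, by rw [h, hc]; ring⟩
    · exact ⟨0, 0, 0, 1, 0, by rw [h]; ring⟩
    · obtain ⟨c, hc⟩ := hD.2
      exact ⟨0, 0, 0, 0, c, by rw [h, hc]; ring⟩
  apply le_antisymm
  · exact Nat.sInf_le hmem
  · apply le_csInf ⟨w, hmem⟩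
    intro k hk
    by_cases hkN : k < N
    · apply y_le_of_dvd hN hann hkN
      obtain ⟨r₀, p₁, p₂, q₁, r, h⟩ := (hP k).1 hk
      rw [h]
      have dA : y ^ w ∣ A := (pow_dvd_pow _ (by omega)).trans hA.1
      have dB : y ^ w ∣ B := (pow_dvd_pow _ (by omega)).trans hB.1
      have dD : y ^ w ∣ D := (pow_dvd_pow _ (by omega)).trans hD.1
      have da : y ^ w ∣ y ^ a := pow_dvd_pow _ (by omega)
      have db : y ^ w ∣ y ^ b := pow_dvd_pow _ (by omega)
      exact dvd_add (dvd_add (dvd_add (dvd_add (dA.mul_left _) (dB.mul_left _))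
        (da.mul_left _)) (db.mul_left _)) (dD.mul_left _)
    · omega

lemma mem_iff {R : Type*} [CommRing R] (ι : K →+* R) (u : R) (hu : u ^ 3 = 0)
    (hgen : ∀ z : R, ∃ p q r, z = ι p + u * ι q + u ^ 2 * ι r)
    (hind : ∀ p q r, ι p + u * ι q + u ^ 2 * ι r = 0 → p = 0 ∧ q = 0 ∧ r = 0)
    {y : K} {N : ℕ} (hN : y ^ N = 0)
    (hann : ∀ (p : K) (a : ℕ), a ≤ N → p * y ^ a = 0 → ∃ r, p = r * y ^ (N - a))
    {h₁ h₂ h₃ : K} {a b t₁ t₂ t₃ : ℕ} (ha : a < N) (hba : b < a)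
    (hb1 : h₁ ≠ 0 → b + a < N + t₁) (k : ℕ) :
    u ^ 2 * ι y ^ k ∈ Ideal.span {ι y ^ a + u * ι y ^ t₁ * ι h₁ + u ^ 2 * ι y ^ t₂ * ι h₂,
      u * ι y ^ b + u ^ 2 * ι y ^ t₃ * ι h₃} ↔
    ∃ r₀ p₁ p₂ q₁ r, y ^ k = r₀ * (y ^ (N + t₂ - a) * h₂ - y ^ (N + t₁ + t₃ - a - b) * (h₁ * h₃))
      + p₁ * (y ^ t₁ * h₁ - y ^ (a + t₃ - b) * h₃) + p₂ * y ^ a + q₁ * y ^ b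
      + r * (y ^ (N + t₃ - b) * h₃) := by
  have e1 : y ^ b * y ^ (N + t₁ - a - b) * h₁ = y ^ (N - a) * y ^ t₁ * h₁ := by
    by_cases h : h₁ = 0
    · simp [h]
    · have := hb1 h
      rw [← pow_add, ← pow_add]; congr 2; omega
  have e1' : y ^ (N + t₁ + t₃ - a - b) * h₁ = y ^ (N + t₁ - a - b) * y ^ t₃ * h₁ := by
    by_cases h : h₁ = 0
    · simp [h]
    · have := hb1 h
      rw [← pow_add]; congr 2; omega
  have e2 : y ^ (N + t₂ - a) = y ^ (N - a) * y ^ t₂ := by rw [← pow_add]; congr 1; omega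
  have e3 : y ^ (a + t₃ - b) = y ^ (a - b) * y ^ t₃ := by rw [← pow_add]; congr 1; omega
  have e4 : y ^ (N + t₃ - b) = y ^ (N - b) * y ^ t₃ := by rw [← pow_add]; congr 1; omega
  have e5 : y ^ a = y ^ (a - b) * y ^ b := by rw [← pow_add]; congr 1; omega
  have e6 : y ^ (N - a) * y ^ a = 0 := by rw [← pow_add, ← hN]; congr 1; omega
  have e7 : y ^ (N - b) * y ^ b = 0 := by rw [← pow_add, ← hN]; congr 1; omega
  rw [Ideal.mem_span_pair, e2, e3, e4]
  have key : ∀ p₀ p₁ p₂ q₀ q₁ q₂ : K,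
      (ι p₀ + u * ι p₁ + u ^ 2 * ι p₂) * (ι y ^ a + u * ι y ^ t₁ * ι h₁ + u ^ 2 * ι y ^ t₂ * ι h₂)
      + (ι q₀ + u * ι q₁ + u ^ 2 * ι q₂) * (u * ι y ^ b + u ^ 2 * ι y ^ t₃ * ι h₃)
      = ι (p₀ * y ^ a) + u * ι (p₀ * y ^ t₁ * h₁ + p₁ * y ^ a + q₀ * y ^ b)
       + u ^ 2 * ι (p₀ * y ^ t₂ * h₂ + p₁ * y ^ t₁ * h₁ + p₂ * y ^ a + q₀ * y ^ t₃ * h₃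
        + q₁ * y ^ b) := by
    intro p₀ p₁ p₂ q₀ q₁ q₂
    simp only [map_add, map_mul, map_pow]
    generalize ι y ^ a = ya
    generalize ι y ^ b = yb
    generalize ι y ^ t₁ = y1
    generalize ι y ^ t₂ = y2
    generalize ι y ^ t₃ = y3
    linear_combination (ι p₁ * y2 * ι h₂ + ι p₂ * y1 * ι h₁ + u * ι p₂ * y2 * ι h₂
      + ι q₁ * y3 * ι h₃ + ι q₂ * yb + u * ι q₂ * y3 * ι h₃) * hu
  constructor
  · rintro ⟨P, Q, h⟩
    obtain ⟨p₀, p₁, p₂, rfl⟩ := hgen P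
    obtain ⟨q₀, q₁, q₂, rfl⟩ := hgen Q
    rw [key] at h
    obtain ⟨i0, i1, i2⟩ := hind (p₀ * y ^ a) (p₀ * y ^ t₁ * h₁ + p₁ * y ^ a + q₀ * y ^ b)
      (p₀ * y ^ t₂ * h₂ + p₁ * y ^ t₁ * h₁ + p₂ * y ^ a + q₀ * y ^ t₃ * h₃
        + q₁ * y ^ b - y ^ k) (by
        rw [map_sub ι _ (y ^ k), map_pow ι y k]
        linear_combination h)
    obtain ⟨r₀, rfl⟩ := hann _ _ ha.le i0
    obtain ⟨r, hr⟩ := hann (q₀ + r₀ * y ^ (N + t₁ - a - b) * h₁ + p₁ * y ^ (a - b)) b (by omega) (by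
      rw [e5] at i1
      linear_combination i1 + r₀ * e1)
    refine ⟨r₀, p₁, p₂, q₁, r, ?_⟩
    have hq : q₀ = r * y ^ (N - b) - r₀ * y ^ (N + t₁ - a - b) * h₁ - p₁ * y ^ (a - b) := by
      linear_combination hr
    rw [hq] at i2
    linear_combination -i2 + r₀ * h₃ * e1'
  · rintro ⟨r₀, p₁, p₂, q₁, r, h⟩
    refine ⟨ι (r₀ * y ^ (N - a)) + u * ι p₁ + u ^ 2 * ι p₂,
      ι (r * y ^ (N - b) - r₀ * y ^ (N + t₁ - a - b) * h₁ - p₁ * y ^ (a - b)) + u * ι q₁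
       + u ^ 2 * ι 0, ?_⟩
    rw [key]
    have i0 : r₀ * y ^ (N - a) * y ^ a = 0 := by linear_combination r₀ * e6
    have i1 : r₀ * y ^ (N - a) * y ^ t₁ * h₁ + p₁ * y ^ a +
      (r * y ^ (N - b) - r₀ * y ^ (N + t₁ - a - b) * h₁ - p₁ * y ^ (a - b)) * y ^ b = 0 := by
      linear_combination p₁ * e5 - r₀ * e1 + r * e7
    have i2 : r₀ * y ^ (N - a) * y ^ t₂ * h₂ + p₁ * y ^ t₁ * h₁ + p₂ * y ^ a +
      (r * y ^ (N - b) - r₀ * y ^ (N + t₁ - a - b) * h₁ - p₁ * y ^ (a - b)) * y ^ t₃ * h₃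
      + q₁ * y ^ b = y ^ k := by
      linear_combination -h + r₀ * h₃ * e1'
    rw [i0, i1, i2]
    simp

end Abstract

section Concrete

lemma fq_pow (m s : ℕ) : ((X : (Fq m)[X]) + 1) ^ (2 ^ s) = gK m s := by
  rw [add_pow_char_pow]; simp

lemma yK_pow (m s : ℕ) : (xK m s + 1) ^ (2 ^ s) = 0 := by
  have h := congrArg (AdjoinRoot.mk (gK m s)) (fq_pow m s)
  rw [AdjoinRoot.mk_self, map_pow, map_add, map_one, AdjoinRoot.mk_X] at h
  exact h

lemma mk_y (m s : ℕ) : AdjoinRoot.mk (gK m s) (X + 1) = xK m s + 1 := by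
  rw [map_add, map_one, AdjoinRoot.mk_X]; rfl

lemma y_ne (m : ℕ) : ((X : (Fq m)[X]) + 1) ≠ 0 := by
  have := (monic_X_add_C (1 : Fq m)).ne_zero
  simpa using this

lemma KK_nontrivial (m s : ℕ) : Nontrivial (KK m s) := by
  apply AdjoinRoot.nontrivial
  rw [← fq_pow, degree_pow]
  have : ((X : (Fq m)[X]) + 1).degree = 1 := by simpa using degree_X_add_C (1 : Fq m)
  rw [this]
  simp

lemma KK_ann (m s : ℕ) (p : KK m s) (a : ℕ) (ha : a ≤ 2 ^ s) (h : p * (xK m s + 1) ^ a = 0) :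
    ∃ r, p = r * (xK m s + 1) ^ (2 ^ s - a) := by
  induction p using AdjoinRoot.induction_on with
  | ih P =>
    rw [← mk_y, ← map_pow, ← map_mul, AdjoinRoot.mk_eq_zero, ← fq_pow] at h
    obtain ⟨c, hc⟩ := h
    refine ⟨AdjoinRoot.mk _ c, ?_⟩
    rw [← mk_y, ← map_pow, ← map_mul]
    congr 1
    have h0 : ((X : (Fq m)[X]) + 1) ^ a ≠ 0 := pow_ne_zero _ (y_ne m)
    apply mul_right_cancel₀ h0
    have : ((X : (Fq m)[X]) + 1) ^ (2 ^ s) = (X + 1) ^ (2 ^ s - a) * (X + 1) ^ a := by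
      rw [← pow_add]; congr 1; omega
    rw [hc, this]; ring

lemma KK_loc (m s : ℕ) (w : KK m s) : IsUnit w ∨ (xK m s + 1) ∣ w := by
  induction w using AdjoinRoot.induction_on with
  | ih P =>
    have hd := X_sub_C_dvd_sub_C_eval (a := (-1 : Fq m)) (p := P)
    obtain ⟨c, hc⟩ := hd
    have hP : P = C (P.eval (-1)) + (X + 1) * c := by
      have : (X - C (-1 : Fq m)) = X + 1 := by simp
      rw [this] at hc
      linear_combination hc
    have hm : AdjoinRoot.mk (gK m s) P = AdjoinRoot.mk (gK m s) (C (P.eval (-1))) +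
        (xK m s + 1) * AdjoinRoot.mk (gK m s) c := by
      rw [← mk_y, ← map_mul, ← map_add, ← hP]
    rw [hm]
    by_cases h0 : P.eval (-1) = 0
    · right; simp [h0]
    · left
      have hu : IsUnit (AdjoinRoot.mk (gK m s) (C (P.eval (-1)))) :=
        ((isUnit_iff_ne_zero.2 h0).map C).map _
      have := unit_add_y (d := 1) (yK_pow m s) one_ne_zero hu (AdjoinRoot.mk (gK m s) c)
      simpa using this

lemma KtoR_xK (m s : ℕ) : KtoR m s (xK m s) = xR m s := by
  unfold KtoR xK; exact AdjoinRoot.lift_root _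

lemma KtoR_y (m s : ℕ) : KtoR m s (xK m s + 1) = xR m s + 1 := by
  rw [map_add, map_one, KtoR_xK]

lemma KtoR_of (m s : ℕ) (c : Fq m) : KtoR m s (AdjoinRoot.of _ c) =
    AdjoinRoot.of (gR m s) (AdjoinRoot.of _ c) := by
  unfold KtoR; rw [AdjoinRoot.lift_of]; rfl

lemma uu_cube (m : ℕ) : uu m ^ 3 = 0 := by
  have h := AdjoinRoot.mk_self (f := (X ^ 3 : (Fq m)[X]))
  rw [map_pow, AdjoinRoot.mk_X] at h
  exact h

lemma uR_cube (m s : ℕ) : uR m s ^ 3 = 0 := by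
  unfold uR; rw [← map_pow, uu_cube, map_zero]

lemma RR_gen (m s : ℕ) (z : RR m s) :
    ∃ p q r, z = KtoR m s p + uR m s * KtoR m s q + uR m s ^ 2 * KtoR m s r := by
  let S : Subring (RR m s) :=
    { carrier := {z | ∃ p q r, z = KtoR m s p + uR m s * KtoR m s q + uR m s ^ 2 * KtoR m s r}
      zero_mem' := ⟨0, 0, 0, by simp⟩
      one_mem' := ⟨1, 0, 0, by simp⟩
      add_mem' := by
        rintro _ _ ⟨p, q, r, rfl⟩ ⟨p', q', r', rfl⟩
        exact ⟨p + p', q + q', r + r', by simp only [map_add]; ring⟩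
      neg_mem' := by
        rintro _ ⟨p, q, r, rfl⟩
        exact ⟨-p, -q, -r, by simp only [map_neg]; ring⟩
      mul_mem' := by
        rintro _ _ ⟨p, q, r, rfl⟩ ⟨p', q', r', rfl⟩
        refine ⟨p * p', p * q' + q * p', p * r' + q * q' + r * p', ?_⟩
        simp only [map_add, map_mul]
        generalize KtoR m s p = p
        generalize KtoR m s q = q
        generalize KtoR m s r = r
        generalize KtoR m s p' = p'
        generalize KtoR m s q' = q'
        generalize KtoR m s r' = r'
        linear_combination (q * r' + r * q' + uR m s * r * r') * uR_cube m s }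
  have hK : ∀ c, KtoR m s c ∈ S := fun c => ⟨c, 0, 0, by simp⟩
  have hu : uR m s ∈ S := ⟨0, 1, 0, by simp⟩
  have hx : xR m s ∈ S := by rw [← KtoR_xK]; exact hK _
  have hof : ∀ c : R3 m, AdjoinRoot.of (gR m s) c ∈ S := by
    intro c
    induction c using AdjoinRoot.induction_on with
    | ih P =>
      induction P using Polynomial.induction_on' with
      | add p q hp hq => rw [map_add, map_add]; exact S.add_mem hp hq
      | monomial n c =>
        rw [← C_mul_X_pow_eq_monomial, map_mul, map_pow, AdjoinRoot.mk_X, AdjoinRoot.mk_C, map_mul,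
          map_pow, ← KtoR_of]
        exact S.mul_mem (hK _) (S.pow_mem hu n)
  suffices z ∈ S from this
  induction z using AdjoinRoot.induction_on with
  | ih P =>
    induction P using Polynomial.induction_on' with
    | add p q hp hq => rw [map_add]; exact S.add_mem hp hq
    | monomial n c =>
      rw [← C_mul_X_pow_eq_monomial, map_mul, map_pow, AdjoinRoot.mk_X, AdjoinRoot.mk_C]
      exact S.mul_mem (hof _) (S.pow_mem hx n)

/-- The model `𝓚[u]/⟨u³⟩` of `𝓡`. -/
abbrev TT (m s : ℕ) : Type := AdjoinRoot (X ^ 3 : (KK m s)[X])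

lemma TT_cube (m s : ℕ) : (AdjoinRoot.root (X ^ 3 : (KK m s)[X])) ^ 3 = 0 := by
  have h := AdjoinRoot.mk_self (f := (X ^ 3 : (KK m s)[X]))
  rwa [map_pow, AdjoinRoot.mk_X] at h

/-- The map from `R₃` to the model. -/
def phi0 (m s : ℕ) : R3 m →+* TT m s :=
  AdjoinRoot.lift ((AdjoinRoot.of (X ^ 3 : (KK m s)[X])).comp (AdjoinRoot.of (gK m s)))
    (AdjoinRoot.root _) (by
      rw [eval₂_X_pow]; exact TT_cube m s)

/-- The map from `𝓡` to the model. -/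
def phi (m s : ℕ) : RR m s →+* TT m s :=
  AdjoinRoot.lift (phi0 m s) (AdjoinRoot.of _ (xK m s)) (by
    simp only [gR, eval₂_add, eval₂_pow, eval₂_X, eval₂_one]
    rw [← map_pow, ← map_one (AdjoinRoot.of (X ^ 3 : (KK m s)[X])), ← map_add, xK_pow_add_one,
      map_zero])

lemma phi_u (m s : ℕ) : phi m s (uR m s) = AdjoinRoot.root _ := by
  have : uR m s = AdjoinRoot.of (gR m s) (uu m) := rfl
  rw [this]; unfold phi; rw [AdjoinRoot.lift_of]
  unfold phi0 uu; exact AdjoinRoot.lift_root _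

lemma phi_K (m s : ℕ) (p : KK m s) : phi m s (KtoR m s p) = AdjoinRoot.of _ p := by
  have hx : phi m s (xR m s) = AdjoinRoot.of _ (xK m s) := by
    unfold phi xR; exact AdjoinRoot.lift_root _
  induction p using AdjoinRoot.induction_on with
  | ih P =>
    induction P using Polynomial.induction_on' with
    | add p q hp hq => rw [map_add, map_add, map_add, map_add, hp, hq]
    | monomial n c =>
      rw [← C_mul_X_pow_eq_monomial, map_mul, map_pow, AdjoinRoot.mk_X, AdjoinRoot.mk_C, map_mul,
          map_pow, KtoR_of, map_mul, map_pow, map_mul, map_pow]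
      have h1 : KtoR m s (AdjoinRoot.root (gK m s)) = xR m s := KtoR_xK m s
      rw [h1, hx]
      congr 1
      unfold phi; rw [AdjoinRoot.lift_of]
      unfold phi0; rw [AdjoinRoot.lift_of]; rfl

lemma RR_ind (m s : ℕ) (p q r : KK m s)
    (h : KtoR m s p + uR m s * KtoR m s q + uR m s ^ 2 * KtoR m s r = 0) :
    p = 0 ∧ q = 0 ∧ r = 0 := by
  have h' := congrArg (phi m s) h
  simp only [map_add, map_mul, map_pow, phi_u, phi_K, map_zero] at h'
  have h2 : AdjoinRoot.mk (X ^ 3 : (KK m s)[X]) (C p + X * C q + X ^ 2 * C r) = 0 := by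
    rw [map_add, map_add, map_mul, map_mul, map_pow, AdjoinRoot.mk_X, AdjoinRoot.mk_C,
      AdjoinRoot.mk_C, AdjoinRoot.mk_C]
    exact h'
  rw [AdjoinRoot.mk_eq_zero, X_pow_dvd_iff] at h2
  have c0 := h2 0 (by norm_num)
  have c1 := h2 1 (by norm_num)
  have c2 := h2 2 (by norm_num)
  simp [coeff_C, coeff_X, coeff_X_pow] at c0 c1 c2
  exact ⟨c0, c1, c2⟩

end Concrete

/-- The value of `W = min{k : u²(x+1)^k ∈ C₇}` for a Type 7 code. -/
theorem stmt16 (m s : ℕ) (hm : 0 < m) (hs : 0 < s)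
    (a b t₁ t₂ t₃ U : ℕ) (h₁ h₂ h₃ : KK m s)
    (hh₁ : h₁ = 0 ∨ IsUnit h₁) (hh₂ : h₂ = 0 ∨ IsUnit h₂) (hh₃ : h₃ = 0 ∨ IsUnit h₃)
    (hU0 : h₁ = 0 → U = a)
    (hU1 : h₁ ≠ 0 → U = min a (2 ^ s + t₁ - a))
    (hbU : b < U) (hUa : U ≤ a) (ha2 : a ≤ 2 ^ s - 1)
    (ht₁ : t₁ < b)
    (C : Ideal (RR m s))
    (hC : C = Ideal.span
      {(xR m s + 1) ^ a + uR m s * (xR m s + 1) ^ t₁ * KtoR m s h₁ +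
         uR m s ^ 2 * (xR m s + 1) ^ t₂ * KtoR m s h₂,
       uR m s * (xR m s + 1) ^ b + uR m s ^ 2 * (xR m s + 1) ^ t₃ * KtoR m s h₃})
    (W : ℕ) (hW : W = sInf {k : ℕ | uR m s ^ 2 * (xR m s + 1) ^ k ∈ C})
    (ht₂ : t₂ < W) (ht₃ : t₃ < W)
    (α₃ α₄ : ℕ)
    (hα₃ : α₃ = sSup {k : ℕ | k ≤ 2 ^ s ∧ (xK m s + 1) ^ k ∣ (h₂ - h₁ * h₃)})
    (hα₄ : α₄ = sSup {k : ℕ | k ≤ 2 ^ s ∧ (xK m s + 1) ^ k ∣ (h₁ - h₃)})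
    (β₃ β₄ : ℕ)
    (hβ₃ : β₃ = if h₂ = 0 then 2 ^ s + t₁ + t₃ - a - b
      else if t₂ + b ≠ t₁ + t₃ then
        min (2 ^ s + t₂ - a) (2 ^ s + t₁ + t₃ - a - b)
      else 2 ^ s + t₁ + t₃ - a - b + α₃)
    (hβ₄ : β₄ = if t₁ + b ≠ a + t₃ then min t₁ (a + t₃ - b) else t₁ + α₄) :
    (h₁ = 0 → h₂ = 0 → h₃ = 0 → W = b) ∧
    (h₁ = 0 → h₂ = 0 → h₃ ≠ 0 → W = min b (a + t₃ - b)) ∧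
    (h₂ ≠ 0 → h₁ = 0 → h₃ = 0 → W = min (2 ^ s + t₂ - a) b) ∧
    (h₁ = 0 → h₂ ≠ 0 → h₃ ≠ 0 → W = min (2 ^ s + t₂ - a) (min b (a + t₃ - b))) ∧
    (h₁ ≠ 0 → h₂ = 0 → h₃ = 0 → W = t₁) ∧
    (h₁ ≠ 0 → h₂ ≠ 0 → h₃ = 0 → W = min (2 ^ s + t₂ - a) t₁) ∧
    (h₁ ≠ 0 → h₃ ≠ 0 → W = min (min β₃ β₄) (min b (2 ^ s + t₃ - b))) := by
  have := KK_nontrivial m s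
  have hN := yK_pow m s
  have hann := KK_ann m s
  have hpos : 0 < 2 ^ s := by positivity
  have ha : a < 2 ^ s := by omega
  have hba : b < a := by omega
  have hb1 : h₁ ≠ 0 → b + a < 2 ^ s + t₁ := fun h => by have := hU1 h; omega
  have hP := fun k => mem_iff (KtoR m s) (uR m s) (uR_cube m s) (RR_gen m s) (RR_ind m s) hN hann
    (h₁ := h₁) (h₂ := h₂) (h₃ := h₃) (t₂ := t₂) (t₃ := t₃) ha hba hb1 k
  simp only [KtoR_y] at hP
  rw [← hC] at hP
  have v3 : YVal (xK m s + 1) (h₂ - h₁ * h₃) α₃ := by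
    rw [hα₃]; exact YVal.of_sup hN (KK_loc m s) _
  have v4 : YVal (xK m s + 1) (h₁ - h₃) α₄ := by
    rw [hα₄]; exact YVal.of_sup hN (KK_loc m s) _
  clear hα₃ hα₄ hC
  have fin := fun vA vB vD hA hB hD => hW.trans (sInf_lemma (vA := vA) (vB := vB) (vD := vD)
    hN hann (by omega : b < 2 ^ s) hba hA hB hD _ hP)
  clear hP hW
  have z := YVal.zero (xK m s + 1) (2 ^ s) (2 ^ s) hN le_rfl
  have un := fun g v => YVal.unit (xK m s + 1) g v
  have hh₁ := fun h => hh₁.resolve_left h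
  have hh₂ := fun h => hh₂.resolve_left h
  have hh₃ := fun h => hh₃.resolve_left h
  refine ⟨?_, ?_, ?_, ?_, ?_, ?_, ?_⟩
  · rintro rfl rfl rfl
    have := fin (2 ^ s) (2 ^ s) (2 ^ s) (by simpa using z) (by simpa using z) (by simpa using z)
    omega
  · rintro rfl rfl h
    have := fin (2 ^ s) _ _ (by simpa using z)
      (by simpa using (un _ (a + t₃ - b) (hh₃ h)).neg) (un _ _ (hh₃ h))
    omega
  · rintro h rfl rfl
    have := fin _ (2 ^ s) (2 ^ s) (by simpa using (un _ (2 ^ s + t₂ - a) (hh₂ h)))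
      (by simpa using z) (by simpa using z)
    omega
  · rintro rfl h h'
    have := fin _ _ _ (by simpa using (un _ (2 ^ s + t₂ - a) (hh₂ h)))
      (by simpa using (un _ (a + t₃ - b) (hh₃ h')).neg) (un _ _ (hh₃ h'))
    omega
  · rintro h rfl rfl
    have := fin (2 ^ s) _ (2 ^ s) (by simpa using z)
      (by simpa using (un _ t₁ (hh₁ h))) (by simpa using z)
    omega
  · rintro h h' rfl
    have := fin _ _ (2 ^ s) (by simpa using (un _ (2 ^ s + t₂ - a) (hh₂ h')))
      (by simpa using (un _ t₁ (hh₁ h))) (by simpa using z)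
    omega
  · intro h h'
    have hb := hb1 h
    have u1 := hh₁ h
    have u3 := hh₃ h'
    refine fin _ _ _ ?_ ?_ (un _ _ u3)
    · rw [hβ₃]
      split_ifs with c1 c2
      · subst c1
        simpa using (un _ (2 ^ s + t₁ + t₃ - a - b) (u1.mul u3)).neg
      · exact YVal.sub_ne hN (hh₂ c1) (u1.mul u3) (by omega)
      · have e : 2 ^ s + t₂ - a = 2 ^ s + t₁ + t₃ - a - b := by omega
        rw [e, ← mul_sub]
        exact v3.shift _
    · rw [hβ₄]
      split_ifs with c2
      · exact YVal.sub_ne hN u1 u3 (by omega)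
      · have e : a + t₃ - b = t₁ := by omega
        rw [e, ← mul_sub]
        exact v4.shift _
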